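/- For all integers k ≥ 1 and ℓ ≥ 1, the sum Σ 1/(n₁ n₂ ⋯ n_k), taken over all k-tuples of positive integers (n₁, …, n_k) with n₁ + n₂ + ⋯ + n_k = ℓ, is at most (k²/ℓ)·(1 + log ℓ)^{k−1}. -/

import Mathlib

/-!
Multiplying `∏ 1/nᵢ` by `ℓ = n₁ + ⋯ + n_k` cancels one factor at a time: `ℓ` times the sum is
`∑ᵢ ∑ₙ ∏_{j ≠ i} 1/nⱼ`. For fixed `i` the missing coordinate is determined by the remaining `k - 1`,
which lie in `{1, …, ℓ}`, so the inner sum is part of the expansion of `(1 + 1/2 + ⋯ + 1/ℓ)^(k-1)`.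
-/

open Finset

/-- The ordered `k`-tuples of positive integers with sum `ℓ`, that is, the compositions of `ℓ` into
`k` parts, encoded as functions on `Fin k` so that a coordinate can be removed by
`Fin.removeNth`. -/
def positiveTuples (k ℓ : ℕ) : Finset (Fin k → ℕ) :=
  (Finset.Nat.antidiagonalTuple k ℓ).filter fun f => ∀ i, 0 < f i

lemma mem_positiveTuples {k ℓ : ℕ} {f : Fin k → ℕ} :
    f ∈ positiveTuples k ℓ ↔ ∑ i, f i = ℓ ∧ ∀ i, 0 < f i := by
  rw [positiveTuples, mem_filter, Finset.Nat.mem_antidiagonalTuple]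

lemma mem_Icc_of_mem_positiveTuples {k ℓ : ℕ} {f : Fin k → ℕ} (hf : f ∈ positiveTuples k ℓ)
    (i : Fin k) : f i ∈ Icc 1 ℓ := by
  obtain ⟨hsum, hpos⟩ := mem_positiveTuples.mp hf
  exact mem_Icc.mpr ⟨hpos i, hsum ▸ single_le_sum_of_canonicallyOrdered (mem_univ i)⟩

lemma injOn_removeNth_of_sum_eq {M : Type*} [AddCommMonoid M] [IsRightCancelAdd M] {m : ℕ}
    (i : Fin (m + 1)) (s : M) :
    Set.InjOn (fun f : Fin (m + 1) → M => i.removeNth f) {f | ∑ j, f j = s} := by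
  intro f hf g hg (hfg : i.removeNth f = i.removeNth g)
  have hsum : f i + ∑ j, i.removeNth f j = g i + ∑ j, i.removeNth g j := by
    rw [Set.mem_ofPred_eq, Fin.sum_univ_succAbove _ i] at hf hg
    exact hf.trans hg.symm
  rw [hfg] at hsum
  rw [← i.insertNth_self_removeNth f, ← i.insertNth_self_removeNth g, hfg,
    add_right_cancel hsum]

lemma sum_mul_prod_inv_eq_sum_removeNth {K : Type*} [Semifield K] {m : ℕ} {f : Fin (m + 1) → K}
    (hf : ∀ i, f i ≠ 0) :
    (∑ i, f i) * ∏ i, (f i)⁻¹ = ∑ i : Fin (m + 1), ∏ j, (i.removeNth f j)⁻¹ := by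
  rw [sum_mul]
  refine sum_congr rfl fun i _ => ?_
  rw [Fin.prod_univ_succAbove _ i, mul_inv_cancel_left₀ (hf i)]
  rfl

lemma sum_prod_le_prod_sum_of_subset_piFinset {ι R : Type*} [Fintype ι] [DecidableEq ι]
    {α : ι → Type*} [CommSemiring R] [PartialOrder R] [IsOrderedRing R]
    {t : ∀ i, Finset (α i)} {T : Finset (∀ i, α i)} {w : ∀ i, α i → R}
    (hT : T ⊆ Fintype.piFinset t) (hw : ∀ i, ∀ a ∈ t i, 0 ≤ w i a) :
    ∑ g ∈ T, ∏ i, w i (g i) ≤ ∏ i, ∑ a ∈ t i, w i a := by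
  rw [prod_univ_sum]
  exact sum_le_sum_of_subset_of_nonneg hT fun g hg _ =>
    prod_nonneg fun i _ => hw i _ (Fintype.mem_piFinset.mp hg i)

section OrderedSemifield

variable (K : Type*) [Semifield K] [LinearOrder K] [IsStrictOrderedRing K] (m ℓ : ℕ)

lemma sum_prod_inv_removeNth_le (i : Fin (m + 1)) :
    ∑ f ∈ positiveTuples (m + 1) ℓ, ∏ j, (i.removeNth f j : K)⁻¹
      ≤ (∑ n ∈ Icc 1 ℓ, (n : K)⁻¹) ^ m := by
  have hinj : Set.InjOn (fun f : Fin (m + 1) → ℕ => i.removeNth f)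
      (positiveTuples (m + 1) ℓ : Set (Fin (m + 1) → ℕ)) :=
    (injOn_removeNth_of_sum_eq i ℓ).mono fun _ hf => (mem_positiveTuples.mp hf).1
  have hbox : (positiveTuples (m + 1) ℓ).image (fun f => i.removeNth f)
      ⊆ Fintype.piFinset fun _ : Fin m => Icc 1 ℓ :=
    image_subset_iff.mpr fun f hf => Fintype.mem_piFinset.mpr fun j =>
      mem_Icc_of_mem_positiveTuples hf (i.succAbove j)
  calc ∑ f ∈ positiveTuples (m + 1) ℓ, ∏ j, (i.removeNth f j : K)⁻¹
      = ∑ g ∈ (positiveTuples (m + 1) ℓ).image (fun f => i.removeNth f),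
          ∏ j, (g j : K)⁻¹ := (sum_image (f := fun g => ∏ j, (g j : K)⁻¹) hinj).symm
    _ ≤ ∏ _j : Fin m, ∑ n ∈ Icc 1 ℓ, (n : K)⁻¹ :=
        sum_prod_le_prod_sum_of_subset_piFinset (w := fun _ (n : ℕ) => (n : K)⁻¹) hbox
          fun _ n _ => inv_nonneg.mpr (Nat.cast_nonneg n)
    _ = (∑ n ∈ Icc 1 ℓ, (n : K)⁻¹) ^ m := Fin.prod_const m _

lemma mul_sum_prod_inv_positiveTuples_le :
    (ℓ : K) * ∑ f ∈ positiveTuples (m + 1) ℓ, ∏ i, (f i : K)⁻¹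
      ≤ (m + 1 : ℕ) * (∑ n ∈ Icc 1 ℓ, (n : K)⁻¹) ^ m := by
  have hcancel : ∀ f ∈ positiveTuples (m + 1) ℓ,
      (ℓ : K) * ∏ i, (f i : K)⁻¹ = ∑ i : Fin (m + 1), ∏ j, (i.removeNth f j : K)⁻¹ := by
    intro f hf
    obtain ⟨hsum, hpos⟩ := mem_positiveTuples.mp hf
    rw [← hsum, Nat.cast_sum]
    exact sum_mul_prod_inv_eq_sum_removeNth fun i => Nat.cast_ne_zero.mpr (hpos i).ne'
  calc (ℓ : K) * ∑ f ∈ positiveTuples (m + 1) ℓ, ∏ i, (f i : K)⁻¹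
      = ∑ i : Fin (m + 1), ∑ f ∈ positiveTuples (m + 1) ℓ, ∏ j, (i.removeNth f j : K)⁻¹ := by
        rw [mul_sum, sum_congr rfl hcancel, sum_comm]
    _ ≤ ∑ _i : Fin (m + 1), (∑ n ∈ Icc 1 ℓ, (n : K)⁻¹) ^ m :=
        sum_le_sum fun i _ => sum_prod_inv_removeNth_le K m ℓ i
    _ = (m + 1 : ℕ) * (∑ n ∈ Icc 1 ℓ, (n : K)⁻¹) ^ m := by rw [Fin.sum_const, nsmul_eq_mul]

end OrderedSemifield

lemma sum_inv_Icc_le_one_add_log (ℓ : ℕ) :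
    ∑ n ∈ Icc 1 ℓ, (n : ℝ)⁻¹ ≤ 1 + Real.log ℓ := by
  simpa [harmonic_eq_sum_Icc] using harmonic_le_one_add_log ℓ

theorem sum_inv_prod_tuples_le_general {k ℓ : ℕ} (hk : 1 ≤ k) (hℓ : 1 ≤ ℓ) :
    ∑ f ∈ positiveTuples k ℓ, ∏ i, (1 / (f i : ℝ))
      ≤ (k / ℓ : ℝ) * (1 + Real.log ℓ) ^ (k - 1) := by
  obtain ⟨m, rfl⟩ := Nat.exists_eq_add_of_le' hk
  have hℓ_pos : (0 : ℝ) < ℓ := Nat.cast_pos.mpr hℓ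
  simp only [one_div]
  rw [div_mul_eq_mul_div, le_div_iff₀' hℓ_pos, Nat.add_sub_cancel]
  refine (mul_sum_prod_inv_positiveTuples_le ℝ m ℓ).trans ?_
  gcongr
  exact sum_inv_Icc_le_one_add_log ℓ

/-- For all integers `k ≥ 1` and `ℓ ≥ 1`, the sum `Σ 1/(n₁ n₂ ⋯ n_k)` over all
ordered `k`-tuples of positive integers `(n₁, …, n_k)` with `n₁ + ⋯ + n_k = ℓ` is at most
`(k²/ℓ)·(1 + log ℓ)^(k−1)`. -/
theorem sum_inv_prod_tuples_le (k ℓ : ℕ) (hk : 1 ≤ k) (hℓ : 1 ≤ ℓ) :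
    ∑ f ∈ (Finset.Nat.antidiagonalTuple k ℓ).filter (fun f => ∀ i, 0 < f i),
        ∏ i, (1 / (f i : ℝ))
      ≤ ((k : ℝ) ^ 2 / (ℓ : ℝ)) * (1 + Real.log ℓ) ^ (k - 1) := by
  have hk_le : (k : ℝ) ≤ (k : ℝ) ^ 2 := mod_cast Nat.le_self_pow two_ne_zero k
  exact (sum_inv_prod_tuples_le_general hk hℓ).trans (by gcongr)
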